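/- For every integer e ≥ 3, there exist two non-isomorphic finite metabelian σ-groups of order 3^{4+e} with abelianization isomorphic to (ZMod (3^e)) × (ZMod 3): one generated by x, y satisfying x^{3^{e+1}} = 1, y^3 = s₃, t₃ = s₃·x^{3^e}, and the other generated by x, y satisfying x^{3^{e+1}} = 1, y^3 = s₃, t₃ = s₃·x^{2·3^e}. -/

import Mathlib

/-- The commutator `[a,b] = a⁻¹ * b⁻¹ * a * b`. -/
def comm' {G : Type*} [Group G] (a b : G) : G := a⁻¹ * b⁻¹ * a * b

/-- `s₂ = [y,x]` and `s_j = [s_(j-1), x]` for `j ≥ 3`. -/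
def sgen {G : Type*} [Group G] (x y : G) : ℕ → G
  | 0 => 1
  | 1 => 1
  | 2 => comm' y x
  | (n + 3) => comm' (sgen x y (n + 2)) x

/-- `t_j = [s_(j-1), y]` for `j ≥ 3`. -/
def tgenD {G : Type*} [Group G] (x y : G) (j : ℕ) : G := comm' (sgen x y (j - 1)) y

/-- `t₂ = [y,x]` and `t_j = [t_(j-1), y]` for `j ≥ 3`. -/
def tgenB {G : Type*} [Group G] (x y : G) : ℕ → G
  | 0 => 1
  | 1 => 1
  | 2 => comm' y x
  | (n + 3) => comm' (tgenB x y (n + 2)) y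

/-- A σ-group: a group admitting an automorphism acting as inversion on the
abelianization. -/
def IsSigmaGroup (G : Type*) [Group G] : Prop :=
  ∃ σ : G ≃* G, ∀ g : G, Abelianization.of (σ g) = (Abelianization.of g)⁻¹

/-- A group is metabelian if its commutator subgroup is abelian, i.e. the second
derived subgroup is trivial. -/
def IsMetabelian (G : Type*) [Group G] : Prop := derivedSeries G 2 = ⊥

/-!
Put `w = x ^ 3 ^ e`. The relations make `s₃`, `t₃` central of order `3`, with `s₃ = y ^ 3` and
`t₃ = s₃ * w ^ ε`, so every element has a normal form `x ^ a * y ^ b * s₂ ^ c` with `a` modulo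
`3 ^ (e + 1)`, `b` modulo `9` and `c` modulo `3`. Collecting a product of two normal forms gives an
explicit group law on these triples, whose correction terms are a pair of `2`-cocycles with values
in `⟨s₃⟩` and `⟨t₃⟩`.

The two groups are told apart by power structure. If generators `x`, `y` of the group with
parameter `ε` satisfy the relations with exponent `n`, then `y ^ 9 = 1` kills the first coordinate
of `y` modulo `3`; comparing coordinates in `y ^ 3 = s₃` and `t₃ = s₃ * w ^ n` modulo `3` then
forces `n = ε`.
-/

section Commutator

open scoped commutatorElement

variable {G H : Type*} [Group G] [Group H]

lemma comm'_eq_commutatorElement (a b : G) : comm' a b = ⁅a⁻¹, b⁻¹⁆ := by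
  simp [comm', commutatorElement_def]

lemma comm'_mem_commutator (a b : G) : comm' a b ∈ commutator G := by
  rw [comm'_eq_commutatorElement]
  exact Subgroup.commutator_mem_commutator (Subgroup.mem_top _) (Subgroup.mem_top _)

lemma comm'_eq_of_mul_eq {a b c : G} (h : a * b = b * a * c) : comm' a b = c := by
  rw [comm', mul_assoc, h]
  group

lemma map_comm' (f : G →* H) (a b : G) : f (comm' a b) = comm' (f a) (f b) := by
  simp [comm']

lemma isMetabelian_of_commute_on_ker {A : Type*} [CommGroup A] (f : G →* A)
    (hf : ∀ u ∈ f.ker, ∀ v ∈ f.ker, Commute u v) : IsMetabelian G := by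
  have hle : derivedSeries G 1 ≤ f.ker :=
    (derivedSeries_one G).trans_le (Abelianization.commutator_subset_ker f)
  rw [IsMetabelian, derivedSeries_succ, eq_bot_iff, Subgroup.commutator_le]
  intro u hu v hv
  exact commutatorElement_eq_one_iff_commute.2 (hf u (hle hu) v (hle hv))

lemma isSigmaGroup_of_ker_le_commutator (f : G →* H) (hf : f.ker ≤ commutator G)
    (σ : G ≃* G) (hσ : ∀ g, f (σ g) = (f g)⁻¹) : IsSigmaGroup G := by
  refine ⟨σ, fun g => eq_inv_of_mul_eq_one_left ?_⟩
  rw [← map_mul, ← MonoidHom.mem_ker, Abelianization.ker_of]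
  exact hf (by rw [MonoidHom.mem_ker, map_mul, hσ, inv_mul_cancel])

lemma nonempty_abelianization_mulEquiv_of_ker_le {A : Type*} [CommGroup A] (f : G →* A)
    (hsurj : Function.Surjective f) (hker : f.ker ≤ commutator G) :
    Nonempty (Abelianization G ≃* A) :=
  ⟨(QuotientGroup.quotientMulEquivOfEq
    ((Abelianization.commutator_subset_ker f).antisymm hker)).trans
      (QuotientGroup.quotientKerEquivOfSurjective f hsurj)⟩

end Commutator

section GeneratingPair

variable {G H : Type*} [Group G] [Group H]

/-- The pair `(x, y)` generates `G` and satisfies the relations of type D.11, with the last one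
written as `t₃ = s₃ * x ^ N`; the two groups of the theorem are `N = 3 ^ e` and `N = 2 * 3 ^ e`. -/
def IsD11GeneratingPair (e N : ℕ) (x y : G) : Prop :=
  Subgroup.closure {x, y} = ⊤ ∧
    x ^ 3 ^ (e + 1) = 1 ∧ y ^ 3 = sgen x y 3 ∧ tgenD x y 3 = sgen x y 3 * x ^ N

lemma IsD11GeneratingPair.map {e N : ℕ} {x y : G} (h : IsD11GeneratingPair e N x y) (f : G →* H)
    (hf : Function.Surjective f) : IsD11GeneratingPair e N (f x) (f y) := by
  obtain ⟨hgen, hx, hy, ht⟩ := h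
  refine ⟨?_, ?_, ?_, ?_⟩
  · rw [← Set.image_pair, ← MonoidHom.map_closure, hgen, Subgroup.map_top_of_surjective f hf]
  · rw [← map_pow, hx, map_one]
  · simpa only [map_pow, sgen, map_comm'] using congrArg f hy
  · simpa only [map_mul, map_pow, sgen, tgenD, map_comm', Nat.reduceSub] using congrArg f ht

lemma det_ne_zero_of_closure_ofAdd_eq_top {R : Type*} [CommRing R] [Nontrivial R] {v w : R × R}
    (h : Subgroup.closure {Multiplicative.ofAdd v, Multiplicative.ofAdd w} = ⊤) :
    v.1 * w.2 - v.2 * w.1 ≠ 0 := by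
  have hspan (z : R × R) : ∃ k l : ℤ, k • v + l • w = z :=
    Subgroup.mem_closure_pair.1 (h ▸ Subgroup.mem_top (Multiplicative.ofAdd z))
  obtain ⟨k, l, hkl⟩ := hspan (1, 0)
  obtain ⟨m, n, hmn⟩ := hspan (0, 1)
  simp only [Prod.ext_iff, Prod.fst_add, Prod.snd_add, zsmul_eq_mul, Prod.fst_mul, Prod.snd_mul,
    Prod.fst_intCast, Prod.snd_intCast] at hkl hmn
  intro hdet
  have hone : (1 : R) = (k * n - l * m) * (v.1 * w.2 - v.2 * w.1) := by
    linear_combination -(m * v.2 + n * w.2) * hkl.1 - hmn.2 + (m * v.1 + n * w.1) * hkl.2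
  exact one_ne_zero (hone.trans (by rw [hdet, mul_zero]))

end GeneratingPair

namespace ZModPow

lemma natCast_dvd_of_castHom_eq_zero {d n : ℕ} (h : d ∣ n) {a : ZMod n}
    (ha : ZMod.castHom h (ZMod d) a = 0) : (d : ZMod n) ∣ a := by
  obtain ⟨z, rfl⟩ := ZMod.intCast_surjective a
  rw [map_intCast, ZMod.intCast_zmod_eq_zero_iff_dvd] at ha
  simpa using map_dvd (Int.castRingHom (ZMod n)) ha

variable {p : ℕ} (n : ℕ)

/-- Reduction `ℤ/pⁿ⁺¹ → ℤ/p`. -/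
def reduce : ZMod (p ^ (n + 1)) →+* ZMod p :=
  ZMod.castHom (dvd_pow_self p n.succ_ne_zero) (ZMod p)

/-- The embedding `ℤ/p → ℤ/pⁿ⁺¹` induced by multiplication by `pⁿ`; it carries the exponents of
the central elements `s₃` and `w`, of order `3`, to exponents of `y` and `x`. -/
def embed : ZMod p →+ ZMod (p ^ (n + 1)) :=
  ZMod.lift p ⟨zmultiplesHom _ ((p : ZMod (p ^ (n + 1))) ^ n), by
    simpa [pow_succ'] using ZMod.natCast_self (p ^ (n + 1))⟩

lemma reduce_surjective : Function.Surjective (reduce (p := p) n) :=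
  ZMod.ringHom_surjective _

@[simp]
lemma embed_reduce (a : ZMod (p ^ (n + 1))) : embed n (reduce n a) = p ^ n * a := by
  obtain ⟨z, rfl⟩ := ZMod.intCast_surjective a
  rw [map_intCast, embed, ZMod.lift_coe]
  simp [mul_comm]

lemma embed_natCast (k : ℕ) : embed n (k : ZMod p) = p ^ n * k := by
  rw [← map_natCast (reduce n), embed_reduce]

lemma embed_one : embed n (1 : ZMod p) = p ^ n := by
  simpa using embed_natCast (p := p) n 1

@[simp]
lemma reduce_embed [NeZero n] (k : ZMod p) : reduce n (embed n k) = 0 := by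
  obtain ⟨a, rfl⟩ := reduce_surjective n k
  simp [NeZero.ne n]

lemma castHom_embed (k : ZMod p) :
    ZMod.castHom (pow_dvd_pow p n.le_succ) (ZMod (p ^ n)) (embed n k) = 0 := by
  obtain ⟨a, rfl⟩ := reduce_surjective n k
  rw [embed_reduce, map_mul, ← Nat.cast_pow, map_natCast, ZMod.natCast_self, zero_mul]

lemma natCast_mul_embed (k : ZMod p) : (p : ZMod (p ^ (n + 1))) * embed n k = 0 := by
  rw [← nsmul_eq_mul, ← map_nsmul, nsmul_eq_mul, CharP.cast_eq_zero, zero_mul, map_zero]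

lemma three_mul_embed (k : ZMod 3) : 3 * embed n k = 0 :=
  natCast_mul_embed n k

lemma embed_injective [NeZero p] : Function.Injective (embed (p := p) n) := by
  rw [injective_iff_map_eq_zero]
  intro k hk
  obtain ⟨z, rfl⟩ := ZMod.intCast_surjective k
  rw [← map_intCast (reduce n), embed_reduce, ← Nat.cast_pow, ← Int.cast_natCast,
    ← Int.cast_mul, ZMod.intCast_zmod_eq_zero_iff_dvd, pow_succ, Nat.cast_mul] at hk
  rw [ZMod.intCast_zmod_eq_zero_iff_dvd]
  exact Int.dvd_of_mul_dvd_mul_left (by simp [NeZero.ne p]) hk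

lemma exists_embed_eq_of_natCast_dvd {a : ZMod (p ^ (n + 1))}
    (ha : ((p ^ n : ℕ) : ZMod (p ^ (n + 1))) ∣ a) : ∃ k, embed n k = a := by
  obtain ⟨b, rfl⟩ := ha
  exact ⟨reduce n b, by rw [embed_reduce, Nat.cast_pow]⟩

end ZModPow

open ZModPow

section Collection

variable {R : Type*} [CommRing R]

/-- The exponent of `s₃` that appears when `x ^ i * y ^ j * s₂ ^ k * (x ^ i' * y ^ j' * s₂ ^ k')` is
collected into normal form: `k * i'` from moving `s₂ ^ k` past `x ^ i'`, and `choose i' 2 * j` from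
moving `y ^ j` past `x ^ i'`. Modulo `3` the binomial coefficient is `choose i' 2 = i' - i' ^ 2`. -/
def s₃Exp (i' j k : R) : R := k * i' + (i' - i' ^ 2) * j

/-- The exponent of `t₃` that appears when `x ^ i * y ^ j * s₂ ^ k * (x ^ i' * y ^ j' * s₂ ^ k')` is
collected into normal form: `i' * choose j 2` from moving `y ^ j` past `x ^ i'`, after which
`s₂ ^ (k + i' * j)` is moved past `y ^ j'`. -/
def t₃Exp (i' j k j' : R) : R := i' * (j - j ^ 2) + (k + i' * j) * j'

variable [CharP R 3]

lemma s₃Exp_cocycle (j k i' j' k' i'' : R) :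
    s₃Exp i' j k + s₃Exp i'' (j + j') (k + k' + i' * j) =
      s₃Exp i'' j' k' + s₃Exp (i' + i'') j k := by
  unfold s₃Exp
  linear_combination i' * i'' * j * CharP.ofNat_eq_zero R 3

lemma t₃Exp_cocycle (j k i' j' k' i'' j'' : R) :
    t₃Exp i' j k j' + t₃Exp i'' (j + j') (k + k' + i' * j) j'' =
      t₃Exp i'' j' k' j'' + t₃Exp (i' + i'') j k (j' + j'') := by
  unfold t₃Exp
  linear_combination -i'' * j * j' * CharP.ofNat_eq_zero R 3

lemma s₃Exp_add_s₃Exp_self (i j k : R) :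
    s₃Exp i j k + s₃Exp i (j + j) (k + k + i * j) = i ^ 2 * j := by
  unfold s₃Exp
  linear_combination (k * i + i * j - i ^ 2 * j) * CharP.ofNat_eq_zero R 3

lemma t₃Exp_add_t₃Exp_self (i j k : R) :
    t₃Exp i j k j + t₃Exp i (j + j) (k + k + i * j) j = -(i * j ^ 2) := by
  unfold t₃Exp
  linear_combination (i * j + k * j) * CharP.ofNat_eq_zero R 3

lemma s₃Exp_neg_neg (i' j k : R) : s₃Exp (-i') (-j) k = -s₃Exp i' j k - i' * j := by
  unfold s₃Exp
  linear_combination i' * j * CharP.ofNat_eq_zero R 3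

lemma t₃Exp_neg_neg_neg (i' j k j' : R) :
    t₃Exp (-i') (-j) k (-j') = -t₃Exp i' j k j' - i' * j := by
  unfold t₃Exp
  linear_combination i' * j * CharP.ofNat_eq_zero R 3

end Collection

/-- The group of order `3 ^ (4 + e)` with parameter `ε`, in which `t₃ = s₃ * x ^ (ε * 3 ^ e)`. The
triple `(a, b, c)` stands for the normal form `x ^ a * y ^ b * s₂ ^ c`. -/
@[ext]
structure D11Group (e : ℕ) (ε : ZMod 3) where
  a : ZMod (3 ^ (e + 1))
  b : ZMod (3 ^ (1 + 1))
  c : ZMod 3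

namespace D11Group

variable {e : ℕ} {ε : ZMod 3}

/-- The first coordinate modulo `3`, on which the correction terms of the group law depend. -/
def aMod (u : D11Group e ε) : ZMod 3 := reduce e u.a

/-- The second coordinate modulo `3`, on which the correction terms of the group law depend. -/
def bMod (u : D11Group e ε) : ZMod 3 := reduce 1 u.b

@[simp]
lemma aMod_mk (a b c) : (⟨a, b, c⟩ : D11Group e ε).aMod = reduce e a := rfl

@[simp]
lemma bMod_mk (a b c) : (⟨a, b, c⟩ : D11Group e ε).bMod = reduce 1 b := rfl

-- `s₃ = y ^ 3` contributes to `b` and `t₃ = s₃ * x ^ (ε * 3 ^ e)` to both `a` and `b`.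
instance : Mul (D11Group e ε) where
  mul u v :=
    ⟨u.a + v.a + embed e (ε * t₃Exp v.aMod u.bMod u.c v.bMod),
      u.b + v.b + embed 1 (s₃Exp v.aMod u.bMod u.c + t₃Exp v.aMod u.bMod u.c v.bMod),
      u.c + v.c + v.aMod * u.bMod⟩

instance : One (D11Group e ε) where
  one := ⟨0, 0, 0⟩

instance : Inv (D11Group e ε) where
  inv u :=
    ⟨-u.a - embed e (ε * t₃Exp u.aMod (-u.bMod) (-u.c + u.aMod * u.bMod) u.bMod),
      -u.b - embed 1 (s₃Exp u.aMod (-u.bMod) (-u.c + u.aMod * u.bMod) +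
        t₃Exp u.aMod (-u.bMod) (-u.c + u.aMod * u.bMod) u.bMod),
      -u.c + u.aMod * u.bMod⟩

@[simp]
lemma mul_a (u v : D11Group e ε) :
    (u * v).a = u.a + v.a + embed e (ε * t₃Exp v.aMod u.bMod u.c v.bMod) := rfl

@[simp]
lemma mul_b (u v : D11Group e ε) :
    (u * v).b = u.b + v.b +
      embed 1 (s₃Exp v.aMod u.bMod u.c + t₃Exp v.aMod u.bMod u.c v.bMod) := rfl

@[simp]
lemma mul_c (u v : D11Group e ε) : (u * v).c = u.c + v.c + v.aMod * u.bMod := rfl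

@[simp]
lemma one_a : (1 : D11Group e ε).a = 0 := rfl

@[simp]
lemma one_b : (1 : D11Group e ε).b = 0 := rfl

@[simp]
lemma one_c : (1 : D11Group e ε).c = 0 := rfl

@[simp]
lemma inv_a (u : D11Group e ε) : u⁻¹.a =
    -u.a - embed e (ε * t₃Exp u.aMod (-u.bMod) (-u.c + u.aMod * u.bMod) u.bMod) := rfl

@[simp]
lemma inv_b (u : D11Group e ε) : u⁻¹.b =
    -u.b - embed 1 (s₃Exp u.aMod (-u.bMod) (-u.c + u.aMod * u.bMod) +
      t₃Exp u.aMod (-u.bMod) (-u.c + u.aMod * u.bMod) u.bMod) := rfl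

@[simp]
lemma inv_c (u : D11Group e ε) : u⁻¹.c = -u.c + u.aMod * u.bMod := rfl

@[simp]
lemma aMod_one : (1 : D11Group e ε).aMod = 0 := map_zero _

@[simp]
lemma bMod_one : (1 : D11Group e ε).bMod = 0 := map_zero _

@[simp]
lemma bMod_mul (u v : D11Group e ε) : (u * v).bMod = u.bMod + v.bMod := by
  simp only [bMod, mul_b, map_add (reduce 1), reduce_embed, add_zero]

@[simp]
lemma bMod_inv (u : D11Group e ε) : u⁻¹.bMod = -u.bMod := by
  simp only [bMod, inv_b, map_sub, map_neg, reduce_embed, sub_zero]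

/-- The coordinates of a group element as a triple. -/
def equivProd : D11Group e ε ≃ ZMod (3 ^ (e + 1)) × ZMod (3 ^ (1 + 1)) × ZMod 3 where
  toFun u := (u.a, u.b, u.c)
  invFun t := ⟨t.1, t.2.1, t.2.2⟩

instance : Finite (D11Group e ε) := .of_equiv _ equivProd.symm

lemma card_eq : Nat.card (D11Group e ε) = 3 ^ (4 + e) := by
  simp only [Nat.card_congr equivProd, Nat.card_prod, Nat.card_zmod]
  ring

variable [NeZero e]

@[simp]
lemma aMod_mul (u v : D11Group e ε) : (u * v).aMod = u.aMod + v.aMod := by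
  simp [aMod]

instance : Group (D11Group e ε) :=
  Group.ofLeftAxioms
    (fun u v w => by
      have hs := congrArg (embed 1)
        (s₃Exp_cocycle u.bMod u.c v.aMod v.bMod v.c w.aMod)
      have ht := t₃Exp_cocycle u.bMod u.c v.aMod v.bMod v.c w.aMod w.bMod
      have hta := congrArg (fun r => embed e (ε * r)) ht
      have htb := congrArg (embed 1) ht
      simp only [mul_add, map_add] at hs hta htb
      ext <;> simp only [mul_a, mul_b, mul_c, aMod_mul, bMod_mul, mul_add, map_add]
      · linear_combination hta
      · linear_combination hs + htb
      · ring)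
    (fun u => by ext <;> simp [s₃Exp, t₃Exp])
    (fun u => by ext <;> simp only [mul_a, mul_b, mul_c, bMod_inv, inv_a, inv_b, inv_c, one_a,
      one_b, one_c] <;> ring)

/-- The projection `(a, b, c) ↦ (a, b)` modulo `3`, whose kernel is the Frattini subgroup. -/
def modThree : D11Group e ε →* Multiplicative (ZMod 3 × ZMod 3) where
  toFun u := .ofAdd (u.aMod, u.bMod)
  map_one' := by simp
  map_mul' u v := by simp [← ofAdd_add]

lemma mem_ker_modThree {u : D11Group e ε} :
    u ∈ modThree.ker ↔ u.aMod = 0 ∧ u.bMod = 0 :=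
  Prod.mk_eq_zero

lemma isMetabelian : IsMetabelian (D11Group e ε) := by
  refine isMetabelian_of_commute_on_ker modThree fun u hu v hv => ?_
  obtain ⟨hua, hub⟩ := mem_ker_modThree.1 hu
  obtain ⟨hva, hvb⟩ := mem_ker_modThree.1 hv
  ext <;> simp [hua, hub, hva, hvb, s₃Exp, t₃Exp, add_comm]

lemma comm'_mem_ker_modThree (u v : D11Group e ε) : comm' u v ∈ modThree.ker :=
  Abelianization.commutator_subset_ker modThree (comm'_mem_commutator u v)

lemma comm'_c (u v : D11Group e ε) : (comm' u v).c = u.bMod * v.aMod - u.aMod * v.bMod := by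
  have h : v * u * comm' u v = u * v := by simp [comm', mul_assoc]
  obtain ⟨ha, -⟩ := mem_ker_modThree.1 (comm'_mem_ker_modThree u v)
  have hc := congrArg c h
  simp only [mul_c, ha] at hc
  linear_combination hc

lemma comm'_of_mem_ker_modThree {u : D11Group e ε} (hu : u ∈ modThree.ker) (v : D11Group e ε) :
    comm' u v = ⟨embed e (ε * (u.c * v.bMod)), embed 1 (u.c * (v.aMod + v.bMod)), 0⟩ := by
  obtain ⟨ha, hb⟩ := mem_ker_modThree.1 hu
  refine comm'_eq_of_mul_eq ?_
  ext
  · simp [ha, hb, t₃Exp, add_comm, -Nat.reduceAdd]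
  · simp [ha, hb, s₃Exp, t₃Exp, mul_add, add_comm, -Nat.reduceAdd]
  · simp [ha, hb, add_comm]

lemma sgen_three (x y : D11Group e ε) :
    sgen x y 3 =
      ⟨embed e (ε * ((y.bMod * x.aMod - y.aMod * x.bMod) * x.bMod)),
        embed 1 ((y.bMod * x.aMod - y.aMod * x.bMod) * (x.aMod + x.bMod)), 0⟩ := by
  rw [← comm'_c]
  exact comm'_of_mem_ker_modThree (comm'_mem_ker_modThree y x) x

lemma tgenD_three (x y : D11Group e ε) :
    tgenD x y 3 =
      ⟨embed e (ε * ((y.bMod * x.aMod - y.aMod * x.bMod) * y.bMod)),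
        embed 1 ((y.bMod * x.aMod - y.aMod * x.bMod) * (y.aMod + y.bMod)), 0⟩ := by
  rw [← comm'_c]
  exact comm'_of_mem_ker_modThree (comm'_mem_ker_modThree y x) y

lemma pow_three (u : D11Group e ε) :
    u ^ 3 = ⟨3 * u.a - embed e (ε * (u.aMod * u.bMod ^ 2)),
      3 * u.b + embed 1 (u.aMod ^ 2 * u.bMod - u.aMod * u.bMod ^ 2), 0⟩ := by
  have hs := congrArg (embed 1) (s₃Exp_add_s₃Exp_self u.aMod u.bMod u.c)
  have ht := t₃Exp_add_t₃Exp_self u.aMod u.bMod u.c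
  have hta := congrArg (fun r => embed e (ε * r)) ht
  have htb := congrArg (embed 1) ht
  simp only [mul_add, mul_neg, map_add, map_neg] at hs hta htb
  rw [pow_succ, pow_two]
  ext <;> simp only [mul_a, mul_b, mul_c, bMod_mul, map_add, map_sub]
  · linear_combination hta
  · linear_combination hs + htb
  · linear_combination (u.c + u.aMod * u.bMod) * CharP.ofNat_eq_zero (ZMod 3) 3

lemma mk_a_pow (a : ZMod (3 ^ (e + 1))) (n : ℕ) :
    (⟨a, 0, 0⟩ : D11Group e ε) ^ n = ⟨n * a, 0, 0⟩ := by
  induction n with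
  | zero => ext <;> simp
  | succ n ih => rw [pow_succ, ih]; ext <;> simp [s₃Exp, t₃Exp, add_mul]

lemma mk_b_pow (b : ZMod (3 ^ (1 + 1))) (n : ℕ) :
    (⟨0, b, 0⟩ : D11Group e ε) ^ n = ⟨0, n * b, 0⟩ := by
  induction n with
  | zero => ext <;> simp
  | succ n ih => rw [pow_succ, ih]; ext <;> simp [s₃Exp, t₃Exp, add_mul]

lemma mk_c_pow (c : ZMod 3) (n : ℕ) :
    (⟨0, 0, c⟩ : D11Group e ε) ^ n = ⟨0, 0, n * c⟩ := by
  induction n with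
  | zero => ext <;> simp
  | succ n ih => rw [pow_succ, ih]; ext <;> simp [s₃Exp, t₃Exp, add_mul]

/-- The generator `x`. -/
def genX : D11Group e ε := ⟨1, 0, 0⟩

/-- The generator `y`. -/
def genY : D11Group e ε := ⟨0, 1, 0⟩

lemma genX_pow (n : ℕ) : (genX : D11Group e ε) ^ n = ⟨n, 0, 0⟩ := by
  rw [genX, mk_a_pow, mul_one]

lemma comm'_genY_genX : comm' (genY : D11Group e ε) genX = ⟨0, 0, 1⟩ := by
  refine comm'_eq_of_mul_eq ?_
  ext <;> simp [genX, genY, s₃Exp, t₃Exp]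

lemma eq_genX_pow_mul_genY_pow_mul (u : D11Group e ε) :
    u = genX ^ u.a.val * genY ^ u.b.val * comm' genY genX ^ u.c.val := by
  rw [comm'_genY_genX, genX_pow, genY, mk_b_pow, mk_c_pow]
  ext <;> simp [s₃Exp, t₃Exp]

lemma closure_genX_genY : Subgroup.closure {genX, (genY : D11Group e ε)} = ⊤ := by
  refine (Subgroup.eq_top_iff' _).2 fun u => ?_
  have hx : genX ∈ Subgroup.closure {genX, (genY : D11Group e ε)} :=
    Subgroup.subset_closure (Set.mem_insert _ _)
  have hy : genY ∈ Subgroup.closure {genX, (genY : D11Group e ε)} :=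
    Subgroup.subset_closure (Set.mem_insert_of_mem _ rfl)
  rw [eq_genX_pow_mul_genY_pow_mul u]
  exact mul_mem (mul_mem (pow_mem hx _) (pow_mem hy _))
    (pow_mem (mul_mem (mul_mem (mul_mem (inv_mem hy) (inv_mem hx)) hy) hx) _)

lemma tgenD_genX_genY {n : ℕ} (hn : (n : ZMod 3) = ε) :
    tgenD genX genY 3 = sgen genX genY 3 * (genX : D11Group e ε) ^ (n * 3 ^ e) := by
  have hw : ((n * 3 ^ e : ℕ) : ZMod (3 ^ (e + 1))) = embed e ε := by
    rw [← hn, embed_natCast]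
    push_cast
    ring
  rw [sgen_three, tgenD_three, genX_pow, hw]
  ext <;> simp [genX, genY, s₃Exp, t₃Exp]

lemma isD11GeneratingPair {n : ℕ} (hn : (n : ZMod 3) = ε) :
    IsD11GeneratingPair e (n * 3 ^ e) genX (genY : D11Group e ε) := by
  refine ⟨closure_genX_genY, ?_, ?_, tgenD_genX_genY hn⟩
  · rw [genX_pow, ZMod.natCast_self]
    rfl
  · rw [sgen_three, pow_three]
    ext <;> simp [genX, genY, embed_one, -Nat.reduceAdd]

/-- The projection `(a, b, c) ↦ (a mod 3 ^ e, b mod 3)`, which induces the isomorphism from the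
abelianization when `ε ≠ 0`. -/
def toAbelianization : D11Group e ε →* Multiplicative (ZMod (3 ^ e) × ZMod 3) where
  toFun u := .ofAdd (ZMod.castHom (pow_dvd_pow 3 e.le_succ) (ZMod (3 ^ e)) u.a, u.bMod)
  map_one' := by simp
  map_mul' u v := by
    rw [← ofAdd_add, bMod_mul, mul_a, map_add, map_add, castHom_embed, add_zero, Prod.mk_add_mk]

lemma toAbelianization_surjective :
    Function.Surjective (toAbelianization : D11Group e ε →* _) := by
  rintro ⟨a, b⟩
  obtain ⟨a, rfl⟩ := ZMod.castHom_surjective (pow_dvd_pow 3 e.le_succ) a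
  obtain ⟨b, rfl⟩ := reduce_surjective 1 b
  exact ⟨⟨a, b, 0⟩, rfl⟩

lemma embed_embed_mem_commutator (hε : ε ≠ 0) (f g k : ZMod 3) :
    (⟨embed e f, embed 1 g, k⟩ : D11Group e ε) ∈ commutator (D11Group e ε) := by
  have hmem (r : ZMod 3) : (⟨0, 0, r⟩ : D11Group e ε) ∈ modThree.ker :=
    mem_ker_modThree.2 ⟨map_zero _, map_zero _⟩
  have hs : (⟨0, embed 1 (g - ε⁻¹ * f), 0⟩ : D11Group e ε) ∈ commutator (D11Group e ε) := by
    have h := comm'_mem_commutator (⟨0, 0, g - ε⁻¹ * f⟩ : D11Group e ε) genX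
    simpa [comm'_of_mem_ker_modThree (hmem _), genX, -map_sub] using h
  have ht : (⟨embed e f, embed 1 (ε⁻¹ * f), 0⟩ : D11Group e ε) ∈ commutator (D11Group e ε) := by
    have h := comm'_mem_commutator (⟨0, 0, ε⁻¹ * f⟩ : D11Group e ε) genY
    simpa [comm'_of_mem_ker_modThree (hmem _), genY, hε] using h
  have hk : (⟨0, 0, k⟩ : D11Group e ε) ∈ commutator (D11Group e ε) := by
    have h := pow_mem (comm'_mem_commutator (genY : D11Group e ε) genX) k.val
    simpa [comm'_genY_genX, mk_c_pow] using h
  convert mul_mem (mul_mem hs ht) hk using 1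
  ext <;> simp [s₃Exp, t₃Exp]

lemma ker_toAbelianization_le (hε : ε ≠ 0) :
    toAbelianization.ker ≤ commutator (D11Group e ε) := by
  intro u hu
  obtain ⟨ha, hb⟩ := Prod.mk_eq_zero.1 (MonoidHom.mem_ker.1 hu)
  obtain ⟨f, hf⟩ := exists_embed_eq_of_natCast_dvd e (natCast_dvd_of_castHom_eq_zero _ ha)
  obtain ⟨g, hg⟩ := exists_embed_eq_of_natCast_dvd 1 (natCast_dvd_of_castHom_eq_zero _ hb)
  have hu' : u = ⟨embed e f, embed 1 g, u.c⟩ := by rw [hf, hg]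
  rw [hu']
  exact embed_embed_mem_commutator hε f g u.c

lemma nonempty_abelianization_mulEquiv (hε : ε ≠ 0) :
    Nonempty (Abelianization (D11Group e ε) ≃* Multiplicative (ZMod (3 ^ e) × ZMod 3)) :=
  nonempty_abelianization_mulEquiv_of_ker_le toAbelianization toAbelianization_surjective
    (ker_toAbelianization_le hε)

/-- The automorphism that inverts `x` and `y`. -/
def invAut : D11Group e ε ≃* D11Group e ε where
  toFun u := ⟨-u.a - embed e (ε * u.c), -u.b + embed 1 u.c, u.c⟩
  invFun u := ⟨-u.a - embed e (ε * u.c), -u.b + embed 1 u.c, u.c⟩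
  left_inv u := by ext <;> simp
  right_inv u := by ext <;> simp
  map_mul' u v := by
    have ha (u : D11Group e ε) : reduce e (-u.a - embed e (ε * u.c)) = -u.aMod := by
      rw [map_sub, map_neg, reduce_embed, sub_zero, aMod]
    have hb (u : D11Group e ε) : reduce 1 (-u.b + embed 1 u.c) = -u.bMod := by
      rw [map_add, map_neg, reduce_embed, add_zero, bMod]
    have hthree : embed 1 (v.aMod * u.bMod) + embed 1 (v.aMod * u.bMod) +
        embed 1 (v.aMod * u.bMod) = 0 := by
      linear_combination three_mul_embed 1 (v.aMod * u.bMod)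
    ext
    · simp only [mul_a, mul_c, aMod_mk, bMod_mk, ha, hb, t₃Exp_neg_neg_neg, mul_add, mul_sub,
        mul_neg, map_add, map_sub, map_neg]
      ring
    · simp only [mul_b, mul_c, aMod_mk, bMod_mk, ha, hb, s₃Exp_neg_neg, t₃Exp_neg_neg_neg,
        map_add, map_sub, map_neg]
      linear_combination hthree
    · simp only [mul_c, aMod_mk, bMod_mk, ha, hb, neg_mul_neg]

lemma isSigmaGroup (hε : ε ≠ 0) : IsSigmaGroup (D11Group e ε) := by
  refine isSigmaGroup_of_ker_le_commutator toAbelianization (ker_toAbelianization_le hε)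
    invAut fun u => congrArg Multiplicative.ofAdd (Prod.ext ?_ ?_)
  · change ZMod.castHom _ _ (-u.a - embed e (ε * u.c)) = -ZMod.castHom _ _ u.a
    rw [map_sub, map_neg, castHom_embed, sub_zero]
  · change reduce 1 (-u.b + embed 1 u.c) = -reduce 1 u.b
    rw [map_add, map_neg, reduce_embed, add_zero]

lemma det_ne_zero_of_closure_eq_top {x y : D11Group e ε} (h : Subgroup.closure {x, y} = ⊤) :
    x.aMod * y.bMod - x.bMod * y.aMod ≠ 0 := by
  have hsurj : Function.Surjective (modThree : D11Group e ε →* _) := by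
    rintro ⟨i, j⟩
    obtain ⟨a, rfl⟩ := reduce_surjective e i
    obtain ⟨b, rfl⟩ := reduce_surjective 1 j
    exact ⟨⟨a, b, 0⟩, rfl⟩
  have himage : Subgroup.closure {modThree x, modThree y} = ⊤ := by
    rw [← Set.image_pair, ← MonoidHom.map_closure, h, Subgroup.map_top_of_surjective _ hsurj]
  exact det_ne_zero_of_closure_ofAdd_eq_top himage

lemma aMod_pow_three (u : D11Group e ε) : (u ^ 3).aMod = 0 := by
  rw [pow_succ, pow_two, aMod_mul, aMod_mul]
  linear_combination u.aMod * CharP.ofNat_eq_zero (ZMod 3) 3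

lemma pow_nine (u : D11Group e ε) : u ^ 9 = ⟨9 * u.a, 0, 0⟩ := by
  have hnine : (9 : ZMod (3 ^ (1 + 1))) = 0 := rfl
  rw [show u ^ 9 = (u ^ 3) ^ 3 from pow_mul u 3 3, pow_three (u ^ 3), aMod_pow_three, pow_three]
  ext
  · simp only [zero_mul, mul_zero, map_zero, sub_zero]
    linear_combination -three_mul_embed e (ε * (u.aMod * u.bMod ^ 2))
  · simp only [zero_mul, zero_pow two_ne_zero, map_zero, sub_zero, add_zero]
    linear_combination u.b * hnine +
      three_mul_embed 1 (u.aMod ^ 2 * u.bMod - u.aMod * u.bMod ^ 2)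
  · rfl

lemma pow_three_pow (he : 2 ≤ e) (u : D11Group e ε) : u ^ 3 ^ e = ⟨embed e u.aMod, 0, 0⟩ := by
  obtain ⟨l, rfl⟩ := Nat.exists_eq_add_of_le he
  have hexp : 3 ^ (2 + l) = 9 * 3 ^ l := by rw [pow_add]; rfl
  rw [hexp, pow_mul, pow_nine, mk_a_pow, aMod, embed_reduce]
  congr 1
  push_cast
  ring

lemma sgen_three_pow_three (x y : D11Group e ε) : sgen x y 3 ^ 3 = 1 := by
  rw [pow_three, sgen_three]
  simp only [aMod_mk, bMod_mk, reduce_embed, three_mul_embed, mul_zero,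
    zero_pow two_ne_zero, map_zero, sub_zero, add_zero]
  rfl

lemma aMod_eq_zero_of_pow_three_eq_sgen (he : 2 ≤ e) {x y : D11Group e ε}
    (h : y ^ 3 = sgen x y 3) : y.aMod = 0 := by
  have hnine : y ^ 9 = 1 := by
    rw [show y ^ 9 = (y ^ 3) ^ 3 from pow_mul y 3 3, h, sgen_three_pow_three]
  have hpow : y ^ 3 ^ e = 1 := by
    obtain ⟨l, rfl⟩ := Nat.exists_eq_add_of_le he
    rw [pow_add, pow_mul, show y ^ 3 ^ 2 = 1 from hnine, one_pow]
  rw [pow_three_pow he] at hpow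
  exact embed_injective e ((congrArg a hpow).trans (map_zero _).symm)

lemma bMod_eq_of_pow_three_eq_sgen {x y : D11Group e ε} (ha : y.aMod = 0)
    (h : y ^ 3 = sgen x y 3) : y.bMod = y.bMod * x.aMod * (x.aMod + x.bMod) := by
  have hb := congrArg b h
  rw [pow_three, sgen_three] at hb
  simp only [ha, zero_mul, zero_pow two_ne_zero, map_zero, sub_zero, add_zero] at hb
  refine embed_injective 1 (Eq.trans ?_ hb)
  rw [bMod, embed_reduce]
  rfl

lemma coord_eq_of_tgenD_eq (he : 2 ≤ e) {n : ℕ} {x y : D11Group e ε} (ha : y.aMod = 0)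
    (h : tgenD x y 3 = sgen x y 3 * x ^ (n * 3 ^ e)) :
    ε * (y.bMod * x.aMod * y.bMod) = ε * (y.bMod * x.aMod * x.bMod) + n * x.aMod ∧
      y.bMod * x.aMod * y.bMod = y.bMod * x.aMod * (x.aMod + x.bMod) := by
  rw [mul_comm, pow_mul, pow_three_pow he, mk_a_pow, tgenD_three, sgen_three, ha] at h
  constructor
  · refine embed_injective e ?_
    simpa [t₃Exp, ← nsmul_eq_mul] using congrArg a h
  · refine embed_injective 1 ?_
    simpa [s₃Exp, t₃Exp, ← nsmul_eq_mul, -Nat.reduceAdd] using congrArg b h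

lemma natCast_eq_of_isD11GeneratingPair (he : 2 ≤ e) {n : ℕ} {x y : D11Group e ε}
    (h : IsD11GeneratingPair e (n * 3 ^ e) x y) : (n : ZMod 3) = ε := by
  obtain ⟨hgen, -, hy, ht⟩ := h
  have ha : y.aMod = 0 := aMod_eq_zero_of_pow_three_eq_sgen he hy
  have hb := bMod_eq_of_pow_three_eq_sgen ha hy
  obtain ⟨hta, htb⟩ := coord_eq_of_tgenD_eq he ha ht
  have hdet := det_ne_zero_of_closure_eq_top hgen
  rw [ha, mul_zero, sub_zero] at hdet
  have hx0 : x.aMod ≠ 0 := left_ne_zero_of_mul hdet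
  have hy0 : y.bMod ≠ 0 := right_ne_zero_of_mul hdet
  have hbMod : y.bMod = x.aMod + x.bMod :=
    mul_left_cancel₀ (mul_ne_zero hy0 hx0) htb
  have hone : x.aMod * y.bMod = 1 := by
    refine mul_left_cancel₀ hy0 ?_
    linear_combination htb - hb
  refine mul_right_cancel₀ hx0 ?_
  linear_combination -hta + ε * y.bMod * x.aMod * hbMod + ε * x.aMod * hone

lemma isEmpty_mulEquiv (he : 2 ≤ e) {ε δ : ZMod 3} (h : ε ≠ δ) :
    IsEmpty (D11Group e ε ≃* D11Group e δ) := by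
  refine ⟨fun f => h ?_⟩
  have hpair := isD11GeneratingPair (e := e) (ZMod.natCast_zmod_val ε)
  rw [← natCast_eq_of_isD11GeneratingPair he (hpair.map f.toMonoidHom f.surjective),
    ZMod.natCast_zmod_val]

end D11Group

open D11Group

theorem stmt6_general (e : ℕ) (he : 2 ≤ e) :
    ∃ (G₁ : Type) (_ : Group G₁) (_ : Finite G₁)
      (G₂ : Type) (_ : Group G₂) (_ : Finite G₂),
      IsEmpty (G₁ ≃* G₂) ∧
      (∃ x y : G₁,
        Subgroup.closure {x, y} = ⊤ ∧
        x ^ 3 ^ (e + 1) = 1 ∧ y ^ 3 = sgen x y 3 ∧ tgenD x y 3 = sgen x y 3 * x ^ (3 ^ e)) ∧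
      (∃ x y : G₂,
        Subgroup.closure {x, y} = ⊤ ∧
        x ^ 3 ^ (e + 1) = 1 ∧ y ^ 3 = sgen x y 3 ∧ tgenD x y 3 = sgen x y 3 * x ^ (2 * 3 ^ e)) ∧
      Nat.card G₁ = 3 ^ (4 + e) ∧ Nat.card G₂ = 3 ^ (4 + e) ∧
      IsMetabelian G₁ ∧ IsMetabelian G₂ ∧
      IsSigmaGroup G₁ ∧ IsSigmaGroup G₂ ∧
      Nonempty (Abelianization G₁ ≃* Multiplicative (ZMod (3 ^ e) × ZMod 3)) ∧
      Nonempty (Abelianization G₂ ≃* Multiplicative (ZMod (3 ^ e) × ZMod 3)) := by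
  have : NeZero e := ⟨by lia⟩
  have hpair₁ : IsD11GeneratingPair e (3 ^ e) genX (genY : D11Group e 1) := by
    simpa only [one_mul] using isD11GeneratingPair Nat.cast_one
  have hpair₂ : IsD11GeneratingPair e (2 * 3 ^ e) genX (genY : D11Group e 2) :=
    isD11GeneratingPair Nat.cast_ofNat
  have hone : (1 : ZMod 3) ≠ 0 := by decide
  have htwo : (2 : ZMod 3) ≠ 0 := by decide
  exact ⟨D11Group e 1, inferInstance, inferInstance, D11Group e 2, inferInstance, inferInstance,
    isEmpty_mulEquiv he (by decide), ⟨genX, genY, hpair₁⟩, ⟨genX, genY, hpair₂⟩, card_eq, card_eq,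
    isMetabelian, isMetabelian, isSigmaGroup hone, isSigmaGroup htwo,
    nonempty_abelianization_mulEquiv hone, nonempty_abelianization_mulEquiv htwo⟩

theorem stmt6 (e : ℕ) (he : 3 ≤ e) :
    ∃ (G₁ : Type) (_ : Group G₁) (_ : Finite G₁)
      (G₂ : Type) (_ : Group G₂) (_ : Finite G₂),
      IsEmpty (G₁ ≃* G₂) ∧
      (∃ x y : G₁,
        Subgroup.closure {x, y} = ⊤ ∧
        x ^ 3 ^ (e + 1) = 1 ∧ y ^ 3 = sgen x y 3 ∧ tgenD x y 3 = sgen x y 3 * x ^ (3 ^ e)) ∧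
      (∃ x y : G₂,
        Subgroup.closure {x, y} = ⊤ ∧
        x ^ 3 ^ (e + 1) = 1 ∧ y ^ 3 = sgen x y 3 ∧ tgenD x y 3 = sgen x y 3 * x ^ (2 * 3 ^ e)) ∧
      Nat.card G₁ = 3 ^ (4 + e) ∧ Nat.card G₂ = 3 ^ (4 + e) ∧
      IsMetabelian G₁ ∧ IsMetabelian G₂ ∧
      IsSigmaGroup G₁ ∧ IsSigmaGroup G₂ ∧
      Nonempty (Abelianization G₁ ≃* Multiplicative (ZMod (3 ^ e) × ZMod 3)) ∧
      Nonempty (Abelianization G₂ ≃* Multiplicative (ZMod (3 ^ e) × ZMod 3)) :=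
  stmt6_general e (by lia)
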